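/- arXiv:1808.02804 — 2 statements merged into one kernel-verified Lean document; each statement's English description precedes it below -/
import Mathlib

section
/- Let T be a hyperbolic homeomorphism of a compact metric space (X,d) with constant ε₀. Let f : X → ℝ be continuous and strictly positive, and let a ∈ (0,1). Then there exists b ≥ 0 such that for every z ∈ X, every n ≥ 0, and every z' ∈ W^s_{ε₀}(z) ∪ T^{-n}(W^u_{ε₀}(T^n z)), one has f^{(n)}(z') ≥ a·f^{(n)}(z) − b, where f^{(n)} := f + f∘T + ··· + f∘T^{n−1} (and f^{(0)} := 0). (Lemma A.7 of the paper.) -/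
/-- Local stable set `W^s_ε(x)`. -/
def locStable {X : Type*} [MetricSpace X] (T : X ≃ₜ X) (ε : ℝ) (x : X) : Set X :=
  {y | ∀ n : ℕ, dist ((T : X → X)^[n] y) ((T : X → X)^[n] x) ≤ ε}

/-- Local unstable set `W^u_ε(x)`. -/
def locUnstable {X : Type*} [MetricSpace X] (T : X ≃ₜ X) (ε : ℝ) (x : X) : Set X :=
  {y | ∀ n : ℕ, dist ((T.symm : X → X)^[n] y) ((T.symm : X → X)^[n] x) ≤ ε}

/-- Global stable set `W^s(x)`. -/
def gStable {X : Type*} [MetricSpace X] (T : X ≃ₜ X) (x : X) : Set X :=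
  {y | Filter.Tendsto (fun n : ℕ => dist ((T : X → X)^[n] y) ((T : X → X)^[n] x))
    Filter.atTop (nhds 0)}

/-- Global unstable set `W^u(x)`. -/
def gUnstable {X : Type*} [MetricSpace X] (T : X ≃ₜ X) (x : X) : Set X :=
  {y | Filter.Tendsto (fun n : ℕ => dist ((T.symm : X → X)^[n] y) ((T.symm : X → X)^[n] x))
    Filter.atTop (nhds 0)}

/-- `T` is a hyperbolic homeomorphism with constants `ε₀, ε₁`, hyperbolicity exponents
`lu, ls`, bracket map `br` and bracket constant `C₀`. -/
structure HypHomeo {X : Type*} [MetricSpace X] (T : X ≃ₜ X) (ε₀ ε₁ : ℝ)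
    (lu ls : X → ℝ) (br : X → X → X) (C₀ : ℝ) : Prop where
  lipschitz_T : ∃ K : NNReal, LipschitzWith K (T : X → X)
  lipschitz_Tinv : ∃ K : NNReal, LipschitzWith K (T.symm : X → X)
  eps0_pos : 0 < ε₀
  cont_lu : Continuous lu
  cont_ls : Continuous ls
  pos_lu : ∀ x, 0 < lu x
  pos_ls : ∀ x, 0 < ls x
  contract_u : ∀ x x' x'', x' ∈ locUnstable T ε₀ x → x'' ∈ locUnstable T ε₀ x →
    dist (T.symm x') (T.symm x'') ≤ Real.exp (-lu x) * dist x' x''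
  contract_s : ∀ y y' y'', y' ∈ locStable T ε₀ y → y'' ∈ locStable T ε₀ y →
    dist (T y') (T y'') ≤ Real.exp (-ls y) * dist y' y''
  eps1_pos : 0 < ε₁
  eps1_lt : ε₁ < ε₀
  bracket_spec : ∀ x y, dist x y ≤ 2 * ε₁ →
    locUnstable T ε₀ x ∩ locStable T ε₀ y = {br x y}
  bracket_cont : ContinuousOn (fun p : X × X => br p.1 p.2) {p : X × X | dist p.1 p.2 ≤ 2 * ε₁}
  C0_pos : 0 < C₀
  bracket_bound : ∀ x y, dist x y ≤ 2 * ε₁ →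
    max (dist (br x y) x) (dist (br x y) y) ≤ C₀ * dist x y

/-!
The bracket of a point with itself is that point, so `T` is expansive with constant `ε₀`. In a
compact space expansiveness is uniform: two points whose orbits stay `ε₀`-close for all times in
`[-N, N]` are `δ`-close, with `N` depending only on `δ`. Hence the orbits of `z` and of any
`z' ∈ W^s_ε₀(z)` are `δ`-close from time `N` on, and for small `δ` this forces
`f (T^j z') ≥ a * f (T^j z)`, because `f` is uniformly continuous and bounded away from `0`. The
first `N` terms are absorbed in `b`. The unstable case is the stable case for `T⁻¹`, with the
Birkhoff sum read backwards.
-/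

open Topology

section Sums

theorem sum_range_le_nsmul_of_nonpos_of_ge {M : Type*} [AddCommMonoid M] [PartialOrder M]
    [IsOrderedAddMonoid M] {g : ℕ → M} {N : ℕ} {C : M} (hC : 0 ≤ C) (hlt : ∀ j < N, g j ≤ C)
    (hge : ∀ j ≥ N, g j ≤ 0) (n : ℕ) : ∑ j ∈ Finset.range n, g j ≤ N • C := by
  have head_le (k : ℕ) (hk : k ≤ N) : ∑ j ∈ Finset.range k, g j ≤ N • C :=
    calc ∑ j ∈ Finset.range k, g j ≤ k • C := by
          simpa using Finset.sum_le_card_nsmul (Finset.range k) g C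
            fun j hj ↦ hlt j ((Finset.mem_range.1 hj).trans_le hk)
      _ ≤ N • C := nsmul_le_nsmul_left hC hk
  rcases le_total n N with hn | hn
  · exact head_le n hn
  · rw [← Finset.sum_range_add_sum_Ico g hn]
    exact add_le_of_le_of_nonpos (head_le N le_rfl)
      (Finset.sum_nonpos fun j hj ↦ hge j (Finset.mem_Ico.1 hj).1)

theorem birkhoffSum_eq_birkhoffSum_of_leftInverse {α M : Type*} [AddCommMonoid M] {S T : α → α}
    (h : Function.LeftInverse S T) (f : α → M) (n : ℕ) (x : α) :
    birkhoffSum T f n x = birkhoffSum S f n (S (T^[n] x)) := by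
  induction n with
  | zero => simp only [birkhoffSum_zero]
  | succ n ih =>
    rw [birkhoffSum_succ, birkhoffSum_succ', Function.iterate_succ_apply', h, ih, add_comm]

end Sums

theorem exists_pos_forall_dist_lt_mul_le {X : Type*} [PseudoMetricSpace X] [CompactSpace X]
    {f : X → ℝ} (hf : Continuous f) (hfpos : ∀ x, 0 < f x) {a : ℝ} (ha : a < 1) :
    ∃ δ > 0, ∀ x y, dist y x < δ → a * f x ≤ f y := by
  obtain ⟨m, hm, hmf⟩ := isCompact_univ.exists_forall_le' hf.continuousOn fun x _ ↦ hfpos x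
  obtain ⟨δ, hδ, hfδ⟩ := Metric.uniformContinuous_iff.1
    (CompactSpace.uniformContinuous_of_continuous hf) ((1 - a) * m) (mul_pos (sub_pos.2 ha) hm)
  refine ⟨δ, hδ, fun x y hyx ↦ ?_⟩
  have hdrop : f x - f y < (1 - a) * m := by
    rw [dist_comm] at hyx
    exact (le_abs_self _).trans_lt (hfδ hyx)
  have hmx : (1 - a) * m ≤ (1 - a) * f x :=
    mul_le_mul_of_nonneg_left (hmf x (Set.mem_univ x)) (sub_pos.2 ha).le
  linarith

section Expansive

variable {X : Type*} [MetricSpace X] {T : X ≃ₜ X} {ε : ℝ} {x y : X}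

theorem self_mem_locStable (hε : 0 ≤ ε) : x ∈ locStable T ε x :=
  fun n ↦ (dist_self (T^[n] x)).trans_le hε

theorem map_mem_locStable (hy : y ∈ locStable T ε x) : T y ∈ locStable T ε (T x) := fun n ↦ by
  simpa only [Function.iterate_succ_apply] using hy (n + 1)

theorem locUnstable_eq_locStable_symm : locUnstable T ε x = locStable T.symm ε x := rfl

/-- `T` is expansive with constant `ε`: a point whose full orbit stays within distance `ε` of the
orbit of `x` is `x` itself. The forward and backward halves of the condition are expressed through
the local stable and unstable sets. -/
def IsExpansiveWith (T : X ≃ₜ X) (ε : ℝ) : Prop :=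
  ∀ x, locUnstable T ε x ∩ locStable T ε x ⊆ {x}

namespace IsExpansiveWith

theorem symm (hT : IsExpansiveWith T ε) : IsExpansiveWith T.symm ε :=
  fun x _ hy ↦ hT x hy.symm

variable [CompactSpace X]

theorem exists_dist_lt_of_forall_le (hT : IsExpansiveWith T ε) {δ : ℝ} (hδ : 0 < δ) :
    ∃ N : ℕ, ∀ x y, (∀ j ≤ N, dist (T.symm^[j] y) (T.symm^[j] x) ≤ ε ∧
      dist (T^[j] y) (T^[j] x) ≤ ε) → dist y x < δ := by
  let V (N : ℕ) : Set (X × X) := {p | ∀ j ≤ N, dist (T.symm^[j] p.2) (T.symm^[j] p.1) ≤ ε ∧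
    dist (T^[j] p.2) (T^[j] p.1) ≤ ε}
  have isClosed_dist_iterate_le {S : X → X} (hS : Continuous S) (j : ℕ) :
      IsClosed {p : X × X | dist (S^[j] p.2) (S^[j] p.1) ≤ ε} :=
    isClosed_le (((hS.iterate j).comp continuous_snd).dist ((hS.iterate j).comp continuous_fst))
      continuous_const
  have V_closed (N : ℕ) : IsClosed (V N) := by
    simp only [V, Set.ofPred_forall, Set.ofPred_and]
    exact isClosed_iInter fun j ↦ isClosed_iInter fun _ ↦
      (isClosed_dist_iterate_le T.symm.continuous j).inter
        (isClosed_dist_iterate_le T.continuous j)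
  have V_antitone : Antitone V := fun M N hMN p hp j hj ↦ hp j (hj.trans hMN)
  have V_iInter : ∀ p ∈ ⋂ N, V N, {p : X × X | dist p.2 p.1 < δ} ∈ 𝓝 p := by
    intro p hp
    have hp' (j : ℕ) := Set.mem_iInter.1 hp j j le_rfl
    have heq : p.2 = p.1 := hT p.1 ⟨fun j ↦ (hp' j).1, fun j ↦ (hp' j).2⟩
    exact (isOpen_lt (by fun_prop) continuous_const).mem_nhds (by simpa [heq] using hδ)
  obtain ⟨N, hN⟩ := exists_subset_nhds_of_compactSpace V_antitone.directed_ge V_closed V_iInter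
  exact ⟨N, fun x y hxy ↦ @hN (x, y) hxy⟩

theorem exists_dist_iterate_lt_of_mem_locStable (hT : IsExpansiveWith T ε) {δ : ℝ} (hδ : 0 < δ) :
    ∃ N : ℕ, ∀ x, ∀ y ∈ locStable T ε x, ∀ n ≥ N, dist (T^[n] y) (T^[n] x) < δ := by
  obtain ⟨N, hN⟩ := hT.exists_dist_lt_of_forall_le hδ
  refine ⟨N, fun x y hy n hn ↦ hN _ _ fun j hj ↦ ⟨?_, ?_⟩⟩
  · have symm_iterate (w : X) : T.symm^[j] (T^[n] w) = T^[n - j] w := by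
      rw [← Nat.add_sub_cancel' (hj.trans hn), Function.iterate_add_apply,
        Function.LeftInverse.iterate T.symm_apply_apply j, Nat.add_sub_cancel_left]
    simpa only [symm_iterate] using hy (n - j)
  · simpa only [← Function.iterate_add_apply] using hy (j + n)

variable {f : X → ℝ} {a : ℝ}

theorem exists_mul_birkhoffSum_sub_le_of_mem_locStable (hT : IsExpansiveWith T ε)
    (hf : Continuous f) (hfpos : ∀ x, 0 < f x) (ha : a < 1) :
    ∃ b ≥ 0, ∀ n x, ∀ y ∈ locStable T ε x, a * birkhoffSum T f n x - b ≤ birkhoffSum T f n y := by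
  obtain ⟨δ, hδ, hfδ⟩ := exists_pos_forall_dist_lt_mul_le hf hfpos ha
  obtain ⟨N, hN⟩ := hT.exists_dist_iterate_lt_of_mem_locStable hδ
  obtain ⟨C, hC, hfC⟩ := (isCompact_range hf).bddAbove.exists_ge 0
  refine ⟨N • C, nsmul_nonneg hC N, fun n x y hy ↦ ?_⟩
  have term_le (u v : X) : a * f u - f v ≤ C := by
    have hau : a * f u ≤ f u := mul_le_of_le_one_left (hfpos u).le ha.le
    linarith [hfC (f u) (Set.mem_range_self u), hfpos v]
  have sum_le : ∑ j ∈ Finset.range n, (a * f (T^[j] x) - f (T^[j] y)) ≤ N • C :=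
    sum_range_le_nsmul_of_nonpos_of_ge hC (fun j _ ↦ term_le _ _)
      (fun j hj ↦ sub_nonpos.2 (hfδ _ _ (hN x y hy j hj))) n
  rw [Finset.sum_sub_distrib, ← Finset.mul_sum] at sum_le
  exact sub_le_comm.1 sum_le

theorem exists_mul_birkhoffSum_sub_le_of_mem_locUnstable (hT : IsExpansiveWith T ε)
    (hf : Continuous f) (hfpos : ∀ x, 0 < f x) (ha : a < 1) :
    ∃ b ≥ 0, ∀ n x y, T^[n] y ∈ locUnstable T ε (T^[n] x) →
      a * birkhoffSum T f n x - b ≤ birkhoffSum T f n y := by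
  obtain ⟨b, hb, h⟩ := hT.symm.exists_mul_birkhoffSum_sub_le_of_mem_locStable hf hfpos ha
  refine ⟨b, hb, fun n x y hy ↦ ?_⟩
  rw [locUnstable_eq_locStable_symm] at hy
  simpa only [birkhoffSum_eq_birkhoffSum_of_leftInverse T.symm_apply_apply]
    using h n _ _ (map_mem_locStable hy)

end IsExpansiveWith

theorem HypHomeo.isExpansiveWith {ε₀ ε₁ : ℝ} {lu ls : X → ℝ} {br : X → X → X} {C₀ : ℝ}
    (hT : HypHomeo T ε₀ ε₁ lu ls br C₀) : IsExpansiveWith T ε₀ := by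
  intro x y hy
  have hx : x ∈ locUnstable T ε₀ x ∩ locStable T ε₀ x :=
    ⟨self_mem_locStable hT.eps0_pos.le, self_mem_locStable hT.eps0_pos.le⟩
  rw [hT.bracket_spec x x (by simpa using hT.eps1_pos.le)] at hx hy
  exact hy.trans hx.symm

end Expansive

theorem birkhoff_sum_comparison_general {X : Type*} [MetricSpace X] [CompactSpace X]
    {T : X ≃ₜ X} {ε : ℝ} (hT : IsExpansiveWith T ε)
    {f : X → ℝ} (hf : Continuous f) (hfpos : ∀ x, 0 < f x) {a : ℝ} (ha : a < 1) :
    ∃ b ≥ 0, ∀ z n z', (z' ∈ locStable T ε z ∨ T^[n] z' ∈ locUnstable T ε (T^[n] z)) →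
      a * birkhoffSum T f n z - b ≤ birkhoffSum T f n z' := by
  obtain ⟨b₁, hb₁, hstable⟩ := hT.exists_mul_birkhoffSum_sub_le_of_mem_locStable hf hfpos ha
  obtain ⟨b₂, -, hunstable⟩ := hT.exists_mul_birkhoffSum_sub_le_of_mem_locUnstable hf hfpos ha
  refine ⟨max b₁ b₂, le_max_of_le_left hb₁, fun z n w h ↦ ?_⟩
  rcases h with hs | hu
  · exact (sub_le_sub_left (le_max_left b₁ b₂) _).trans (hstable n z w hs)
  · exact (sub_le_sub_left (le_max_right b₁ b₂) _).trans (hunstable n z w hu)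

/-- **Lemma A.7** of Bochi–Garibaldi, "Extremal Norms for Fiber-Bunched Cocycles":
for a continuous strictly positive `f` and `a ∈ (0,1)` there is `b ≥ 0` such that
Birkhoff sums satisfy `f⁽ⁿ⁾(z') ≥ a·f⁽ⁿ⁾(z) − b` whenever `z' ∈ W^s_{ε₀}(z)` or
`z' ∈ T^{-n}(W^u_{ε₀}(Tⁿ z))`. -/
theorem birkhoff_sum_comparison {X : Type*} [MetricSpace X] [CompactSpace X]
    (T : X ≃ₜ X) (ε₀ ε₁ : ℝ) (lu ls : X → ℝ) (br : X → X → X) (C₀ : ℝ)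
    (hT : HypHomeo T ε₀ ε₁ lu ls br C₀)
    (f : X → ℝ) (hf : Continuous f) (hfpos : ∀ x, 0 < f x)
    (a : ℝ) (ha0 : 0 < a) (ha1 : a < 1) :
    ∃ b : ℝ, 0 ≤ b ∧ ∀ (z : X) (n : ℕ) (z' : X),
      (z' ∈ locStable T ε₀ z ∨
        (T : X → X)^[n] z' ∈ locUnstable T ε₀ ((T : X → X)^[n] z)) →
      a * (∑ j ∈ Finset.range n, f ((T : X → X)^[j] z)) - b ≤
        ∑ j ∈ Finset.range n, f ((T : X → X)^[j] z') :=
  birkhoff_sum_comparison_general hT.isExpansiveWith hf hfpos ha1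
end

section
/- Let (X,d) be a nonempty compact metric space, T : X → X a homeomorphism, and F : X → GL(d,ℝ) continuous. Suppose F admits an extremal norm N. Then for every x ∈ M(F) and every n ≥ 1, sup{N(T^n x, F^{(n)}(x)u) : u ∈ ℝ^d with N(x,u) ≤ 1} = e^{n·β(F)}. In particular, every T-invariant Borel probability measure whose support is contained in M(F) is Lyapunov maximizing. (Proposition 6.2 of the paper.) -/
/-- Euclidean operator norm of a `d × d` real matrix. -/
noncomputable def matNorm {d : ℕ} (A : Matrix (Fin d) (Fin d) ℝ) : ℝ :=
  ‖LinearMap.toContinuousLinearMap (Matrix.toEuclideanLin A)‖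

/-- Cocycle products: `cocycle T F n x = F(T^{n-1}x) ⬝ ⋯ ⬝ F(Tx) ⬝ F(x)`. -/
def cocycle {X : Type*} (T : X → X) {d : ℕ} (F : X → Matrix (Fin d) (Fin d) ℝ) :
    ℕ → X → Matrix (Fin d) (Fin d) ℝ
  | 0, _ => 1
  | n + 1, x => cocycle T F n (T x) * F x

/-- `μ` is a `T`-invariant Borel probability measure. -/
def IsInvProb {X : Type*} [MeasurableSpace X] (T : X → X)
    (μ : MeasureTheory.Measure X) : Prop :=
  MeasureTheory.IsProbabilityMeasure μ ∧ μ.map T = μ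

/-- Top Lyapunov exponent `χ₁(F, μ)` of the cocycle `(T,F)` w.r.t. the measure `μ`. -/
noncomputable def lyapExp {X : Type*} [MeasurableSpace X] (T : X → X) {d : ℕ}
    (F : X → Matrix (Fin d) (Fin d) ℝ) (μ : MeasureTheory.Measure X) : ℝ :=
  ⨅ n : ℕ, (1 / (n + 1 : ℝ)) * ∫ x, Real.log (matNorm (cocycle T F (n + 1) x)) ∂μ

/-- Maximal Lyapunov exponent `β(F)`. -/
noncomputable def maxLyap {X : Type*} [MeasurableSpace X] (T : X → X) {d : ℕ}
    (F : X → Matrix (Fin d) (Fin d) ℝ) : ℝ :=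
  sSup {r : ℝ | ∃ μ : MeasureTheory.Measure X, IsInvProb T μ ∧ r = lyapExp T F μ}

/-- Topological support of a measure. -/
def measSupport {X : Type*} [TopologicalSpace X] [MeasurableSpace X]
    (μ : MeasureTheory.Measure X) : Set X :=
  {x | ∀ U : Set X, IsOpen U → x ∈ U → 0 < μ U}

/-- The Mather set `M(F)`: union of supports of all Lyapunov maximizing measures. -/
def mather {X : Type*} [TopologicalSpace X] [MeasurableSpace X] (T : X → X) {d : ℕ}
    (F : X → Matrix (Fin d) (Fin d) ℝ) : Set X :=
  ⋃ μ ∈ {μ : MeasureTheory.Measure X | IsInvProb T μ ∧ lyapExp T F μ = maxLyap T F},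
    measSupport μ

/-!
The extremal norm `N` gives fibrewise operator norms `‖F⁽ⁿ⁾(x)‖_N ≤ e^{nβ}`, which are continuous
in `x` and submultiplicative along orbits. By compactness `N` is uniformly comparable to the
Euclidean norm, so Fekete's lemma gives `χ₁(F, μ) = inf_n (1/n) ∫ log ‖F⁽ⁿ⁾‖_N dμ`. If `μ` is
maximizing, then `∫ log ‖F⁽ⁿ⁾‖_N dμ ≥ nβ` while the continuous integrand is at most `nβ`, so it
equals `nβ` on the whole support of `μ`. Conversely, if it equals `nβ` on the support of `μ` for
every `n`, then the infimum is `β`.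
-/

open MeasureTheory Filter Topology Matrix

section Subadditive

variable {u v : ℕ → ℝ}

theorem mul_subadditive_lim_le (hu : Subadditive u)
    (hbdd : BddBelow (Set.range fun n => u n / n)) (n : ℕ) : n * hu.lim ≤ u n := by
  rcases eq_or_ne n 0 with rfl | hn
  · simpa using hu 0 0
  · rw [← le_div_iff₀' (by positivity)]
    exact hu.lim_le_div hbdd hn

theorem subadditive_lim_eq_iInf (hu : Subadditive u) :
    hu.lim = ⨅ n : ℕ, 1 / (n + 1 : ℝ) * u (n + 1) := by
  have hrange : (fun n : ℕ => u n / n) '' Set.Ici 1 =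
      Set.range fun n : ℕ => 1 / (n + 1 : ℝ) * u (n + 1) := by
    have hterm (n : ℕ) : 1 / (n + 1 : ℝ) * u (n + 1) = u (n + 1) / (n + 1 : ℕ) := by
      rw [one_div_mul_eq_div, Nat.cast_add_one]
    simp only [hterm]
    ext r
    constructor
    · rintro ⟨n, hn, rfl⟩
      obtain ⟨m, rfl⟩ := Nat.exists_eq_add_of_le' hn
      exact ⟨m, rfl⟩
    · rintro ⟨m, rfl⟩
      exact ⟨m + 1, Nat.le_add_left 1 m, rfl⟩
  rw [Subadditive.lim, hrange, sInf_range]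

theorem subadditive_lim_le_of_le_add_const (hu : Subadditive u) (hv : Subadditive v)
    (hbu : BddBelow (Set.range fun n => u n / n)) (hbv : BddBelow (Set.range fun n => v n / n))
    {K : ℝ} (huv : ∀ n, u n ≤ v n + K) : hu.lim ≤ hv.lim := by
  have hlim : Tendsto (fun n : ℕ => v n / n + K / n) atTop (𝓝 (hv.lim + 0)) :=
    (hv.tendsto_lim hbv).add (tendsto_const_div_atTop_nhds_zero_nat K)
  rw [add_zero] at hlim
  refine le_of_tendsto_of_tendsto' (hu.tendsto_lim hbu) hlim fun n => ?_
  rw [← add_div]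
  exact div_le_div_of_nonneg_right (huv n) n.cast_nonneg

end Subadditive

theorem integral_comp_measurePreserving {X Y : Type*} [MeasurableSpace X] [MeasurableSpace Y]
    {E : Type*} [NormedAddCommGroup E] [NormedSpace ℝ E] {μ : Measure X} {ν : Measure Y}
    {g : X → Y} (hg : MeasurePreserving g μ ν) {f : Y → E} (hf : AEStronglyMeasurable f ν) :
    ∫ x, f (g x) ∂μ = ∫ y, f y ∂ν := by
  rw [← hg.map_eq] at hf ⊢
  exact (integral_map hg.aemeasurable hf).symm

section Support

variable {X : Type*} [TopologicalSpace X] [MeasurableSpace X] {μ : Measure X}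

theorem measSupport_eq_support (μ : Measure X) : measSupport μ = μ.support := by
  rw [Measure.support_eq_forall_isOpen]
  exact Set.ext fun x => forall_congr' fun U => imp.swap

theorem eq_of_mem_support_of_le_integral [IsProbabilityMeasure μ] {f : X → ℝ} {c : ℝ}
    (hf : Continuous f) (hint : Integrable f μ) (hle : ∀ x, f x ≤ c) (hc : c ≤ ∫ x, f x ∂μ)
    {x : X} (hx : x ∈ μ.support) : f x = c := by
  have hmean : ∫ x, f x ∂μ = ∫ _, c ∂μ := by
    refine le_antisymm (integral_mono hint (integrable_const c) hle) ?_
    rwa [integral_const, probReal_univ, one_smul]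
  have hae : f =ᵐ[μ] fun _ => c :=
    (integral_eq_iff_of_ae_le hint (integrable_const c) (ae_of_all μ hle)).1 hmean
  exact Measure.support_subset_of_isClosed (isClosed_eq hf continuous_const) hae hx

end Support

section Gauge

variable {E : Type*}

/-- The norm of `q` relative to `p`, i.e. the operator norm of the identity from `(E, p)` to
`(E, q)`. The operator norm of a linear map `A` from `(E, p)` to `(E, q)` is obtained by replacing
`q` with `q ∘ A`. -/
noncomputable def relNorm (p q : E → ℝ) : ℝ :=
  sSup {r | ∃ u, p u ≤ 1 ∧ r = q u}

theorem relNorm_le {p q : E → ℝ} {C : ℝ} (hC : 0 ≤ C) (h : ∀ u, q u ≤ C * p u) :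
    relNorm p q ≤ C := by
  refine Real.sSup_le ?_ hC
  rintro _ ⟨u, hu, rfl⟩
  exact (h u).trans (mul_le_of_le_one_right hC hu)

variable [NormedAddCommGroup E] [NormedSpace ℝ E]

/-- A gauge: a continuous, absolutely homogeneous function that is positive away from the origin,
that is, a norm without the triangle inequality. -/
structure IsGauge (p : E → ℝ) : Prop where
  continuous : Continuous p
  smul : ∀ (c : ℝ) (u : E), p (c • u) = |c| * p u
  pos : ∀ u, u ≠ 0 → 0 < p u

namespace IsGauge

variable {p q : E → ℝ}

theorem map_zero (hp : IsGauge p) : p 0 = 0 := by simpa using hp.smul 0 0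

theorem nonneg (hp : IsGauge p) (u : E) : 0 ≤ p u := by
  rcases eq_or_ne u 0 with rfl | hu
  · exact hp.map_zero.ge
  · exact (hp.pos u hu).le

theorem smul_of_nonneg (hp : IsGauge p) {c : ℝ} (hc : 0 ≤ c) (u : E) : p (c • u) = c * p u := by
  rw [hp.smul, abs_of_nonneg hc]

theorem pos_of_mem_sphere (hp : IsGauge p) (v : Metric.sphere (0 : E) 1) : 0 < p v :=
  hp.pos v (ne_zero_of_mem_unit_sphere v)

theorem relNorm_nonneg (hq : IsGauge q) : 0 ≤ relNorm p q := by
  refine Real.sSup_nonneg ?_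
  rintro _ ⟨u, -, rfl⟩
  exact hq.nonneg u

theorem iSup_sphere_nonneg (hp : IsGauge p) (hq : IsGauge q) :
    0 ≤ ⨆ v : Metric.sphere (0 : E) 1, q v / p v :=
  Real.iSup_nonneg fun v => div_nonneg (hq.nonneg v) (hp.nonneg v)

section FiniteDimensional

variable [FiniteDimensional ℝ E]

theorem le_iSup_sphere_mul (hp : IsGauge p) (hq : IsGauge q) (u : E) :
    q u ≤ (⨆ v : Metric.sphere (0 : E) 1, q v / p v) * p u := by
  rcases eq_or_ne u 0 with rfl | hu
  · rw [hp.map_zero, hq.map_zero, mul_zero]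
  have : ProperSpace E := FiniteDimensional.proper_real E
  have hcont : Continuous fun v : Metric.sphere (0 : E) 1 => q v / p v :=
    (hq.continuous.comp continuous_subtype_val).div (hp.continuous.comp continuous_subtype_val)
      fun v => (hp.pos_of_mem_sphere v).ne'
  have hbdd := (isCompact_range hcont).bddAbove
  let v : Metric.sphere (0 : E) 1 := ⟨‖u‖⁻¹ • u, by simp [norm_smul, hu]⟩
  have huv : u = ‖u‖ • (v : E) := (smul_inv_smul₀ (norm_ne_zero_iff.2 hu) u).symm
  have hv : q v ≤ (⨆ v : Metric.sphere (0 : E) 1, q v / p v) * p v :=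
    (div_le_iff₀ (hp.pos_of_mem_sphere v)).1 (le_ciSup hbdd v)
  calc q u = ‖u‖ * q v := by rw [← hq.smul_of_nonneg (norm_nonneg u), ← huv]
    _ ≤ ‖u‖ * ((⨆ v : Metric.sphere (0 : E) 1, q v / p v) * p v) := by gcongr
    _ = (⨆ v : Metric.sphere (0 : E) 1, q v / p v) * p u := by
      rw [mul_left_comm, ← hp.smul_of_nonneg (norm_nonneg u), ← huv]

theorem le_relNorm_mul (hp : IsGauge p) (hq : IsGauge q) (u : E) : q u ≤ relNorm p q * p u := by
  rcases eq_or_ne u 0 with rfl | hu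
  · rw [hp.map_zero, hq.map_zero, mul_zero]
  have hbdd : BddAbove {r | ∃ u, p u ≤ 1 ∧ r = q u} := by
    refine ⟨⨆ v : Metric.sphere (0 : E) 1, q v / p v, ?_⟩
    rintro _ ⟨w, hw, rfl⟩
    exact (hp.le_iSup_sphere_mul hq w).trans
      (mul_le_of_le_one_right (hp.iSup_sphere_nonneg hq) hw)
  have hpu := hp.pos u hu
  have hmem : p ((p u)⁻¹ • u) ≤ 1 := by
    rw [hp.smul_of_nonneg (inv_nonneg.2 hpu.le), inv_mul_cancel₀ hpu.ne']
  have hle : q ((p u)⁻¹ • u) ≤ relNorm p q := le_csSup hbdd ⟨_, hmem, rfl⟩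
  rwa [hq.smul_of_nonneg (inv_nonneg.2 hpu.le), inv_mul_le_iff₀' hpu] at hle

theorem relNorm_eq_iSup_sphere (hp : IsGauge p) (hq : IsGauge q) :
    relNorm p q = ⨆ v : Metric.sphere (0 : E) 1, q v / p v :=
  le_antisymm (relNorm_le (hp.iSup_sphere_nonneg hq) (hp.le_iSup_sphere_mul hq)) <|
    Real.iSup_le (fun v => (div_le_iff₀ (hp.pos_of_mem_sphere v)).2 (hp.le_relNorm_mul hq v))
      hq.relNorm_nonneg

theorem relNorm_pos [Nontrivial E] (hp : IsGauge p) (hq : IsGauge q) : 0 < relNorm p q := by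
  obtain ⟨u, hu⟩ := exists_ne (0 : E)
  exact pos_of_mul_pos_left ((hq.pos u hu).trans_le (hp.le_relNorm_mul hq u)) (hp.nonneg u)

end FiniteDimensional

end IsGauge

end Gauge

section GaugeField

variable {X E : Type*} [TopologicalSpace X] [NormedAddCommGroup E] [NormedSpace ℝ E]

/-- A continuous family of gauges on the fibres of the trivial bundle `X × E`. A Finsler norm on
this bundle is a gauge field that moreover satisfies the triangle inequality in each fibre. -/
structure IsGaugeField (N : X → E → ℝ) : Prop where
  continuous : Continuous fun a : X × E => N a.1 a.2
  smul : ∀ (x : X) (c : ℝ) (u : E), N x (c • u) = |c| * N x u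
  pos : ∀ (x : X) (u : E), u ≠ 0 → 0 < N x u

namespace IsGaugeField

variable {N M : X → E → ℝ}

theorem isGauge (hN : IsGaugeField N) (x : X) : IsGauge (N x) :=
  ⟨hN.continuous.comp (Continuous.prodMk_right x), hN.smul x, hN.pos x⟩

theorem continuous_relNorm [FiniteDimensional ℝ E] (hN : IsGaugeField N) (hM : IsGaugeField M) :
    Continuous fun x => relNorm (N x) (M x) := by
  have : ProperSpace E := FiniteDimensional.proper_real E
  have hincl : Continuous fun a : X × Metric.sphere (0 : E) 1 => (a.1, (a.2 : E)) := by fun_prop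
  have hratio : Continuous fun a : X × Metric.sphere (0 : E) 1 => M a.1 a.2 / N a.1 a.2 :=
    (hM.continuous.comp hincl).div (hN.continuous.comp hincl)
      fun a => ((hN.isGauge a.1).pos_of_mem_sphere a.2).ne'
  have hsup := isCompact_univ.continuous_sSup
    (f := fun x (v : Metric.sphere (0 : E) 1) => M x v / N x v) hratio
  simpa only [Set.image_univ, sSup_range, ← (hN.isGauge _).relNorm_eq_iSup_sphere (hM.isGauge _)]
    using hsup

theorem exists_forall_le_mul [CompactSpace X] [FiniteDimensional ℝ E] (hN : IsGaugeField N)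
    (hM : IsGaugeField M) : ∃ C > 0, ∀ x u, M x u ≤ C * N x u := by
  obtain ⟨C, hC⟩ := (isCompact_range (hN.continuous_relNorm hM)).bddAbove
  refine ⟨max C 1, by positivity, fun x u => ?_⟩
  calc M x u ≤ relNorm (N x) (M x) * N x u := (hN.isGauge x).le_relNorm_mul (hM.isGauge x) u
    _ ≤ max C 1 * N x u :=
      mul_le_mul_of_nonneg_right (le_max_of_le_left (hC ⟨x, rfl⟩)) ((hN.isGauge x).nonneg u)

end IsGaugeField

end GaugeField

section MatrixGauge

variable {d : ℕ}

theorem isGaugeField_euclidean {X : Type*} [TopologicalSpace X] :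
    IsGaugeField fun (_ : X) (u : Fin d → ℝ) => ‖WithLp.toLp 2 u‖ where
  continuous := ((PiLp.continuous_toLp 2 _).comp continuous_snd).norm
  smul _ c u := by rw [WithLp.toLp_smul, norm_smul, Real.norm_eq_abs]
  pos _ u hu := norm_pos_iff.2 fun h => hu (by simpa using h)

theorem matNorm_eq_relNorm (A : Matrix (Fin d) (Fin d) ℝ) :
    matNorm A = relNorm (fun u => ‖WithLp.toLp 2 u‖) (fun u => ‖WithLp.toLp 2 (A *ᵥ u)‖) := by
  rw [matNorm, ← ContinuousLinearMap.sSup_unitClosedBall_eq_norm, relNorm]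
  congr 1
  ext r
  constructor
  · rintro ⟨v, hv, rfl⟩
    exact ⟨WithLp.ofLp v, by simpa using hv, rfl⟩
  · rintro ⟨u, hu, rfl⟩
    exact ⟨WithLp.toLp 2 u, by simpa using hu, rfl⟩

theorem IsGauge.comp_mulVec {p : (Fin d → ℝ) → ℝ} (hp : IsGauge p)
    {A : Matrix (Fin d) (Fin d) ℝ} (hA : IsUnit A) : IsGauge fun u => p (A *ᵥ u) where
  continuous := hp.continuous.comp (continuous_const.matrix_mulVec continuous_id)
  smul c u := by rw [mulVec_smul, hp.smul]
  pos u hu := hp.pos _ fun h => hu (mulVec_injective_of_isUnit hA (h.trans (mulVec_zero A).symm))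

end MatrixGauge

section Cocycle

variable {X : Type*} {d : ℕ} {T : X → X} {F : X → Matrix (Fin d) (Fin d) ℝ}
  {N M : X → (Fin d → ℝ) → ℝ}

theorem cocycle_add (T : X → X) (F : X → Matrix (Fin d) (Fin d) ℝ) (m n : ℕ) (x : X) :
    cocycle T F (m + n) x = cocycle T F m (T^[n] x) * cocycle T F n x := by
  induction n generalizing x with
  | zero => simp [cocycle]
  | succ n ih =>
    calc cocycle T F (m + n) (T x) * F x
        = cocycle T F m (T^[n] (T x)) * cocycle T F n (T x) * F x := by rw [ih]
      _ = cocycle T F m (T^[n] (T x)) * (cocycle T F n (T x) * F x) := mul_assoc _ _ _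

theorem isUnit_cocycle (hFunit : ∀ x, IsUnit (F x)) (n : ℕ) (x : X) :
    IsUnit (cocycle T F n x) := by
  induction n generalizing x with
  | zero => exact isUnit_one
  | succ n ih => exact (ih (T x)).mul (hFunit x)

theorem continuous_cocycle [TopologicalSpace X] (hT : Continuous T) (hF : Continuous F) (n : ℕ) :
    Continuous (cocycle T F n) := by
  induction n with
  | zero => exact continuous_const
  | succ n ih => exact (ih.comp hT).matrix_mul hF

/-- The pullback of the field `N` by the `n`-th iterate of the cocycle `(T, F)`. -/
def cocyclePullback (T : X → X) (F : X → Matrix (Fin d) (Fin d) ℝ) (N : X → (Fin d → ℝ) → ℝ)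
    (n : ℕ) : X → (Fin d → ℝ) → ℝ :=
  fun x u => N (T^[n] x) (cocycle T F n x *ᵥ u)

/-- The operator norm `‖F⁽ⁿ⁾(x)‖_N`, with the fibre over `x` normed by `N x` and the fibre over
`Tⁿ x` by `N (Tⁿ x)`. -/
noncomputable def cocycleNorm (T : X → X) (F : X → Matrix (Fin d) (Fin d) ℝ)
    (N : X → (Fin d → ℝ) → ℝ) (n : ℕ) (x : X) : ℝ :=
  relNorm (N x) (cocyclePullback T F N n x)

theorem matNorm_cocycle (T : X → X) (F : X → Matrix (Fin d) (Fin d) ℝ) (n : ℕ) (x : X) :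
    matNorm (cocycle T F n x) = cocycleNorm T F (fun _ u => ‖WithLp.toLp 2 u‖) n x :=
  matNorm_eq_relNorm _

theorem cocyclePullback_zero (T : X → X) (F : X → Matrix (Fin d) (Fin d) ℝ)
    (N : X → (Fin d → ℝ) → ℝ) : cocyclePullback T F N 0 = N := by
  ext x u
  simp [cocyclePullback, cocycle]

theorem cocyclePullback_one (T : X → X) (F : X → Matrix (Fin d) (Fin d) ℝ)
    (N : X → (Fin d → ℝ) → ℝ) (x : X) (u : Fin d → ℝ) :
    cocyclePullback T F N 1 x u = N (T x) (F x *ᵥ u) := by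
  simp [cocyclePullback, cocycle]

theorem cocyclePullback_add (T : X → X) (F : X → Matrix (Fin d) (Fin d) ℝ)
    (N : X → (Fin d → ℝ) → ℝ) (m n : ℕ) (x : X) (u : Fin d → ℝ) :
    cocyclePullback T F N (m + n) x u =
      cocyclePullback T F N m (T^[n] x) (cocycle T F n x *ᵥ u) := by
  rw [cocyclePullback, cocyclePullback, cocycle_add, Function.iterate_add_apply, mulVec_mulVec]

theorem cocyclePullback_le_pow_mul {C : ℝ} (hC : 0 ≤ C)
    (h : ∀ x u, N (T x) (F x *ᵥ u) ≤ C * N x u) (n : ℕ) (x : X) (u : Fin d → ℝ) :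
    cocyclePullback T F N n x u ≤ C ^ n * N x u := by
  induction n with
  | zero => rw [cocyclePullback_zero, pow_zero, one_mul]
  | succ n ih =>
    calc cocyclePullback T F N (n + 1) x u
        = N (T (T^[n] x)) (F (T^[n] x) *ᵥ (cocycle T F n x *ᵥ u)) := by
          rw [add_comm, cocyclePullback_add, cocyclePullback_one]
      _ ≤ C * cocyclePullback T F N n x u := h _ _
      _ ≤ C * (C ^ n * N x u) := by gcongr
      _ = C ^ (n + 1) * N x u := by ring

theorem le_pow_mul_cocyclePullback {C : ℝ} (hC : 0 ≤ C)
    (h : ∀ x u, N x u ≤ C * N (T x) (F x *ᵥ u)) (n : ℕ) (x : X) (u : Fin d → ℝ) :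
    N x u ≤ C ^ n * cocyclePullback T F N n x u := by
  induction n with
  | zero => rw [cocyclePullback_zero, pow_zero, one_mul]
  | succ n ih =>
    calc N x u ≤ C ^ n * cocyclePullback T F N n x u := ih
      _ ≤ C ^ n * (C * N (T (T^[n] x)) (F (T^[n] x) *ᵥ (cocycle T F n x *ᵥ u))) := by
          gcongr
          exact h _ _
      _ = C ^ (n + 1) * cocyclePullback T F N (n + 1) x u := by
          rw [add_comm n 1, cocyclePullback_add, cocyclePullback_one]
          ring

theorem cocycleNorm_le_exp {β : ℝ} (h : ∀ x u, N (T x) (F x *ᵥ u) ≤ Real.exp β * N x u)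
    (n : ℕ) (x : X) : cocycleNorm T F N n x ≤ Real.exp (n * β) := by
  rw [Real.exp_nat_mul]
  exact relNorm_le (by positivity) (cocyclePullback_le_pow_mul (Real.exp_pos β).le h n x)

section Pointwise

variable (hFunit : ∀ x, IsUnit (F x)) (hN : ∀ x, IsGauge (N x))

include hFunit hN

theorem isGauge_cocyclePullback (n : ℕ) (x : X) : IsGauge (cocyclePullback T F N n x) :=
  (hN _).comp_mulVec (isUnit_cocycle hFunit n x)

theorem cocyclePullback_le_cocycleNorm_mul (n : ℕ) (x : X) (u : Fin d → ℝ) :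
    cocyclePullback T F N n x u ≤ cocycleNorm T F N n x * N x u :=
  (hN x).le_relNorm_mul (isGauge_cocyclePullback hFunit hN n x) u

theorem cocycleNorm_nonneg (n : ℕ) (x : X) : 0 ≤ cocycleNorm T F N n x :=
  (isGauge_cocyclePullback hFunit hN n x).relNorm_nonneg

theorem cocycleNorm_pos [NeZero d] (n : ℕ) (x : X) : 0 < cocycleNorm T F N n x :=
  (hN x).relNorm_pos (isGauge_cocyclePullback hFunit hN n x)

theorem cocycleNorm_add_le (m n : ℕ) (x : X) :
    cocycleNorm T F N (m + n) x ≤ cocycleNorm T F N m (T^[n] x) * cocycleNorm T F N n x := by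
  have hnonneg (k : ℕ) (y : X) : 0 ≤ cocycleNorm T F N k y := cocycleNorm_nonneg hFunit hN k y
  refine relNorm_le (mul_nonneg (hnonneg m _) (hnonneg n x)) fun u => ?_
  calc cocyclePullback T F N (m + n) x u
      = cocyclePullback T F N m (T^[n] x) (cocycle T F n x *ᵥ u) :=
        cocyclePullback_add T F N m n x u
    _ ≤ cocycleNorm T F N m (T^[n] x) * cocyclePullback T F N n x u :=
        cocyclePullback_le_cocycleNorm_mul hFunit hN m _ _
    _ ≤ cocycleNorm T F N m (T^[n] x) * (cocycleNorm T F N n x * N x u) :=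
        mul_le_mul_of_nonneg_left (cocyclePullback_le_cocycleNorm_mul hFunit hN n x u)
          (hnonneg m _)
    _ = cocycleNorm T F N m (T^[n] x) * cocycleNorm T F N n x * N x u := (mul_assoc _ _ _).symm

end Pointwise

variable [TopologicalSpace X]

theorem exists_cocycleNorm_le_mul_cocycleNorm [CompactSpace X] (hFunit : ∀ x, IsUnit (F x))
    (hN : IsGaugeField N) (hM : IsGaugeField M) :
    ∃ C > 0, ∀ n x, cocycleNorm T F M n x ≤ C * cocycleNorm T F N n x := by
  obtain ⟨A, hA, hMN⟩ := hN.exists_forall_le_mul hM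
  obtain ⟨B, hB, hNM⟩ := hM.exists_forall_le_mul hN
  refine ⟨A * B, mul_pos hA hB, fun n x => ?_⟩
  have hnonneg : 0 ≤ cocycleNorm T F N n x := cocycleNorm_nonneg hFunit hN.isGauge n x
  refine relNorm_le (by positivity) fun u => ?_
  calc cocyclePullback T F M n x u ≤ A * cocyclePullback T F N n x u := hMN _ _
    _ ≤ A * (cocycleNorm T F N n x * N x u) := by
        gcongr
        exact cocyclePullback_le_cocycleNorm_mul hFunit hN.isGauge n x u
    _ ≤ A * (cocycleNorm T F N n x * (B * M x u)) := by
        gcongr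
        exact hNM x u
    _ = A * B * cocycleNorm T F N n x * M x u := by ring

theorem IsGaugeField.cocyclePullback (hN : IsGaugeField N) (hT : Continuous T)
    (hF : Continuous F) (hFunit : ∀ x, IsUnit (F x)) (n : ℕ) :
    IsGaugeField (cocyclePullback T F N n) where
  continuous := hN.continuous.comp <| ((hT.iterate n).comp continuous_fst).prodMk <|
    ((continuous_cocycle hT hF n).comp continuous_fst).matrix_mulVec continuous_snd
  smul x := (isGauge_cocyclePullback hFunit hN.isGauge n x).smul
  pos x := (isGauge_cocyclePullback hFunit hN.isGauge n x).pos

section Invertible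

variable [NeZero d] (hT : Continuous T) (hF : Continuous F) (hFunit : ∀ x, IsUnit (F x))
  (hN : IsGaugeField N) (hM : IsGaugeField M)

include hT hF hFunit hN

theorem exists_one_le_pow_mul_cocycleNorm [CompactSpace X] :
    ∃ C > 0, ∀ n x, 1 ≤ C ^ n * cocycleNorm T F N n x := by
  obtain ⟨C, hC, hle⟩ := (hN.cocyclePullback hT hF hFunit 1).exists_forall_le_mul hN
  simp only [cocyclePullback_one] at hle
  refine ⟨C, hC, fun n x => ?_⟩
  obtain ⟨u, hu⟩ := exists_ne (0 : Fin d → ℝ)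
  have hself : 1 * N x u ≤ C ^ n * cocycleNorm T F N n x * N x u := by
    calc 1 * N x u ≤ C ^ n * cocyclePullback T F N n x u := by
          rw [one_mul]
          exact le_pow_mul_cocyclePullback hC.le hle n x u
      _ ≤ C ^ n * (cocycleNorm T F N n x * N x u) := by
          gcongr
          exact cocyclePullback_le_cocycleNorm_mul hFunit hN.isGauge n x u
      _ = C ^ n * cocycleNorm T F N n x * N x u := (mul_assoc _ _ _).symm
  exact le_of_mul_le_mul_right hself (hN.pos x u hu)

theorem continuous_log_cocycleNorm (n : ℕ) :
    Continuous fun x => Real.log (cocycleNorm T F N n x) :=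
  (hN.continuous_relNorm (hN.cocyclePullback hT hF hFunit n)).log
    fun x => (cocycleNorm_pos hFunit hN.isGauge n x).ne'

section Integral

variable [CompactSpace X] [MeasurableSpace X] [BorelSpace X] {μ : Measure X} [IsFiniteMeasure μ]

theorem integrable_log_cocycleNorm (n : ℕ) :
    Integrable (fun x => Real.log (cocycleNorm T F N n x)) μ :=
  (continuous_log_cocycleNorm hT hF hFunit hN n).integrable_of_hasCompactSupport
    (HasCompactSupport.of_compactSpace _)

theorem subadditive_integral_log_cocycleNorm (hμ : MeasurePreserving T μ μ) :
    Subadditive fun n => ∫ x, Real.log (cocycleNorm T F N n x) ∂μ := by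
  intro m n
  have hint (k : ℕ) : Integrable (fun x => Real.log (cocycleNorm T F N k x)) μ :=
    integrable_log_cocycleNorm hT hF hFunit hN k
  have hpos (k : ℕ) (x : X) : 0 < cocycleNorm T F N k x := cocycleNorm_pos hFunit hN.isGauge k x
  have hTn : MeasurePreserving T^[n] μ μ := hμ.iterate n
  have hintT : Integrable (fun x => Real.log (cocycleNorm T F N m (T^[n] x))) μ :=
    hTn.integrable_comp_of_integrable (hint m)
  calc ∫ x, Real.log (cocycleNorm T F N (m + n) x) ∂μ
      ≤ ∫ x, (Real.log (cocycleNorm T F N m (T^[n] x)) + Real.log (cocycleNorm T F N n x)) ∂μ := by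
        refine integral_mono (hint _) (hintT.add (hint n)) fun x => ?_
        dsimp only
        rw [← Real.log_mul (hpos m _).ne' (hpos n x).ne']
        exact Real.log_le_log (hpos _ x) (cocycleNorm_add_le hFunit hN.isGauge m n x)
    _ = ∫ x, Real.log (cocycleNorm T F N m (T^[n] x)) ∂μ +
          ∫ x, Real.log (cocycleNorm T F N n x) ∂μ := integral_add hintT (hint n)
    _ = ∫ x, Real.log (cocycleNorm T F N m x) ∂μ + ∫ x, Real.log (cocycleNorm T F N n x) ∂μ := by
        rw [integral_comp_measurePreserving hTn (hint m).aestronglyMeasurable]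

theorem bddBelow_integral_log_cocycleNorm_div :
    BddBelow (Set.range fun n : ℕ => (∫ x, Real.log (cocycleNorm T F N n x) ∂μ) / n) := by
  obtain ⟨C, hC, hlow⟩ := exists_one_le_pow_mul_cocycleNorm hT hF hFunit hN
  have hlog (n : ℕ) (x : X) : -(n * Real.log C) ≤ Real.log (cocycleNorm T F N n x) := by
    have := Real.log_nonneg (hlow n x)
    rw [Real.log_mul (pow_pos hC n).ne' (cocycleNorm_pos hFunit hN.isGauge n x).ne',
      Real.log_pow] at this
    linarith
  refine ⟨min 0 (-(μ.real Set.univ * Real.log C)), ?_⟩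
  rintro _ ⟨n, rfl⟩
  rcases eq_or_ne n 0 with rfl | hn
  · simp
  refine min_le_of_right_le ((le_div_iff₀ (by positivity)).2 ?_)
  calc -(μ.real Set.univ * Real.log C) * n = ∫ _, -(n * Real.log C) ∂μ := by
        rw [integral_const, smul_eq_mul]
        ring
    _ ≤ ∫ x, Real.log (cocycleNorm T F N n x) ∂μ :=
        integral_mono (integrable_const _) (integrable_log_cocycleNorm hT hF hFunit hN n) (hlog n)

include hM in
theorem lim_integral_log_cocycleNorm_le (hμ : MeasurePreserving T μ μ) :
    (subadditive_integral_log_cocycleNorm hT hF hFunit hM hμ).lim ≤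
      (subadditive_integral_log_cocycleNorm hT hF hFunit hN hμ).lim := by
  obtain ⟨C, hC, hle⟩ := exists_cocycleNorm_le_mul_cocycleNorm hFunit hN hM
  have hint := integrable_log_cocycleNorm hT hF hFunit hN (μ := μ)
  refine subadditive_lim_le_of_le_add_const _ _
    (bddBelow_integral_log_cocycleNorm_div hT hF hFunit hM)
    (bddBelow_integral_log_cocycleNorm_div hT hF hFunit hN)
    (K := ∫ _, Real.log C ∂μ) fun n => ?_
  rw [← integral_add (hint n) (integrable_const _)]
  refine integral_mono (integrable_log_cocycleNorm hT hF hFunit hM n)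
    ((hint n).add (integrable_const _)) fun x => ?_
  dsimp only
  rw [← Real.log_mul (cocycleNorm_pos hFunit hN.isGauge n x).ne' hC.ne', mul_comm]
  exact Real.log_le_log (cocycleNorm_pos hFunit hM.isGauge n x) (hle n x)

theorem lyapExp_eq_lim (hμ : MeasurePreserving T μ μ) :
    lyapExp T F μ = (subadditive_integral_log_cocycleNorm hT hF hFunit hN hμ).lim := by
  have heucl : lyapExp T F μ =
      (subadditive_integral_log_cocycleNorm hT hF hFunit isGaugeField_euclidean hμ).lim := by
    simp only [subadditive_lim_eq_iInf, lyapExp, matNorm_cocycle]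
  rw [heucl]
  exact le_antisymm
    (lim_integral_log_cocycleNorm_le hT hF hFunit hN isGaugeField_euclidean hμ)
    (lim_integral_log_cocycleNorm_le hT hF hFunit isGaugeField_euclidean hN hμ)

theorem mul_lyapExp_le_integral_log_cocycleNorm (hμ : MeasurePreserving T μ μ) (n : ℕ) :
    n * lyapExp T F μ ≤ ∫ x, Real.log (cocycleNorm T F N n x) ∂μ := by
  rw [lyapExp_eq_lim hT hF hFunit hN hμ]
  exact mul_subadditive_lim_le _ (bddBelow_integral_log_cocycleNorm_div hT hF hFunit hN) n

end Integral

section Calibrated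

variable [CompactSpace X] [MeasurableSpace X] [BorelSpace X] {μ : Measure X}
  [IsProbabilityMeasure μ]

theorem cocycleNorm_eq_exp_of_mem_support {β : ℝ}
    (hext : ∀ x u, N (T x) (F x *ᵥ u) ≤ Real.exp β * N x u) (hμ : MeasurePreserving T μ μ)
    (hβ : lyapExp T F μ = β) {x : X} (hx : x ∈ μ.support) (n : ℕ) :
    cocycleNorm T F N n x = Real.exp (n * β) := by
  have hpos (y : X) : 0 < cocycleNorm T F N n y := cocycleNorm_pos hFunit hN.isGauge n y
  have hle (y : X) : Real.log (cocycleNorm T F N n y) ≤ n * β :=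
    (Real.log_le_iff_le_exp (hpos y)).2 (cocycleNorm_le_exp hext n y)
  have hmean : n * β ≤ ∫ y, Real.log (cocycleNorm T F N n y) ∂μ :=
    hβ ▸ mul_lyapExp_le_integral_log_cocycleNorm hT hF hFunit hN hμ n
  have hlog : Real.log (cocycleNorm T F N n x) = n * β :=
    eq_of_mem_support_of_le_integral (continuous_log_cocycleNorm hT hF hFunit hN n)
      (integrable_log_cocycleNorm hT hF hFunit hN n) hle hmean hx
  rw [← hlog, Real.exp_log (hpos x)]

theorem lyapExp_eq_of_ae_cocycleNorm_eq_exp {β : ℝ} (hμ : MeasurePreserving T μ μ)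
    (h : ∀ᵐ x ∂μ, ∀ n : ℕ, cocycleNorm T F N n x = Real.exp (n * β)) : lyapExp T F μ = β := by
  have hintegral (n : ℕ) : ∫ x, Real.log (cocycleNorm T F N n x) ∂μ = n * β := by
    have hae : (fun x => Real.log (cocycleNorm T F N n x)) =ᵐ[μ] fun _ => n * β :=
      h.mono fun x hx => by simp only [hx n, Real.log_exp]
    rw [integral_congr_ae hae, integral_const, probReal_univ, one_smul]
  rw [lyapExp_eq_lim hT hF hFunit hN hμ, subadditive_lim_eq_iInf]
  have hterm (n : ℕ) : 1 / (n + 1 : ℝ) * (((n + 1 : ℕ) : ℝ) * β) = β := by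
    push_cast
    field_simp
  simp only [hintegral, hterm, ciInf_const]

end Calibrated

end Invertible

end Cocycle

theorem extremal_norm_calibrated_on_mather_general {X : Type*} [TopologicalSpace X]
    [CompactSpace X] [HereditarilyLindelofSpace X] [MeasurableSpace X] [BorelSpace X]
    {T : X → X} (hT : Continuous T) {d : ℕ} [NeZero d] {F : X → Matrix (Fin d) (Fin d) ℝ}
    (hF : Continuous F) (hFunit : ∀ x, IsUnit (F x)) {N : X → (Fin d → ℝ) → ℝ}
    (hN : IsGaugeField N)
    (hext : ∀ x u, N (T x) (F x *ᵥ u) ≤ Real.exp (maxLyap T F) * N x u) :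
    (∀ x ∈ mather T F, ∀ n : ℕ, cocycleNorm T F N n x = Real.exp (n * maxLyap T F)) ∧
    ∀ μ : Measure X, IsInvProb T μ → measSupport μ ⊆ mather T F →
      lyapExp T F μ = maxLyap T F := by
  have hcal : ∀ x ∈ mather T F, ∀ n : ℕ,
      cocycleNorm T F N n x = Real.exp (n * maxLyap T F) := by
    intro x hx n
    obtain ⟨μ, ⟨⟨_, hinv⟩, hmax⟩, hxμ⟩ := Set.mem_iUnion₂.1 hx
    rw [measSupport_eq_support] at hxμ
    exact cocycleNorm_eq_exp_of_mem_support hT hF hFunit hN hext ⟨hT.measurable, hinv⟩ hmax hxμ n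
  refine ⟨hcal, fun μ ⟨_, hinv⟩ hsupp => ?_⟩
  rw [measSupport_eq_support] at hsupp
  have hae : ∀ᵐ x ∂μ, x ∈ mather T F := mem_of_superset Measure.support_mem_ae hsupp
  exact lyapExp_eq_of_ae_cocycleNorm_eq_exp hT hF hFunit hN ⟨hT.measurable, hinv⟩ (hae.mono hcal)

/-- **Proposition 6.2** of Bochi–Garibaldi, "Extremal Norms for Fiber-Bunched Cocycles":
if `F` admits an extremal norm `N`, then the `N`-operator norm of `F⁽ⁿ⁾(x)` equals
`e^{n β(F)}` for every `x` in the Mather set and every `n ≥ 1`; in particular, every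
invariant measure supported inside the Mather set is Lyapunov maximizing. -/
theorem extremal_norm_calibrated_on_mather {X : Type*} [MetricSpace X]
    [CompactSpace X] [Nonempty X] [MeasurableSpace X] [BorelSpace X]
    (T : X ≃ₜ X) (d : ℕ) (hd : 1 ≤ d) (F : X → Matrix (Fin d) (Fin d) ℝ)
    (hFcont : Continuous F) (hFunit : ∀ x, IsUnit (F x))
    (N : X → (Fin d → ℝ) → ℝ)
    (hNcont : Continuous fun p : X × (Fin d → ℝ) => N p.1 p.2)
    (hNadd : ∀ x u v, N x (u + v) ≤ N x u + N x v)
    (hNsmul : ∀ (x : X) (c : ℝ) (u : Fin d → ℝ), N x (c • u) = |c| * N x u)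
    (hNpos : ∀ (x : X) (u : Fin d → ℝ), u ≠ 0 → 0 < N x u)
    (hNext : ∀ (x : X) (u : Fin d → ℝ),
      N (T x) ((F x).mulVec u) ≤ Real.exp (maxLyap (T : X → X) F) * N x u) :
    (∀ x ∈ mather (T : X → X) F, ∀ n : ℕ, 1 ≤ n →
      sSup {r : ℝ | ∃ u : Fin d → ℝ, N x u ≤ 1 ∧
          r = N ((T : X → X)^[n] x) ((cocycle (T : X → X) F n x).mulVec u)} =
        Real.exp (n * maxLyap (T : X → X) F)) ∧
    ∀ μ : MeasureTheory.Measure X, IsInvProb (T : X → X) μ →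
      measSupport μ ⊆ mather (T : X → X) F →
      lyapExp (T : X → X) F μ = maxLyap (T : X → X) F := by
  have : NeZero d := ⟨Nat.one_le_iff_ne_zero.1 hd⟩
  have h := extremal_norm_calibrated_on_mather_general T.continuous hFcont hFunit
    ⟨hNcont, hNsmul, hNpos⟩ hNext
  exact ⟨fun x hx n _ => h.1 x hx n, h.2⟩
end
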